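/- Let G be a finite simple graph containing a vertex v of degree 5, and let v₁, v₂, v₃, v₄ be four distinct neighbors of v such that v₁v₂ and v₃v₄ are edges of G and these are the only edges among {v₁, v₂, v₃, v₄} (so v₁ is not adjacent to v₃ or v₄, and v₂ is not adjacent to v₃ or v₄). Suppose deg(v₁) = deg(v₃) = 4 and deg(v₂) = deg(v₄) = 5. If G − {v, v₁, v₂, v₃, v₄} is (3,1)-decomposable, then G is (3,1)-decomposable. (This is Case 2 of Lemma 2.3(1), the configuration of two non-adjacent (4,5,5)-triangles at v.) -/

import Mathlib

open SimpleGraph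

/-- A graph `H` is `d`-degenerate: every induced subgraph on a nonempty vertex set
has a vertex of degree at most `d` (within that induced subgraph). -/
def Degenerate {V : Type*} (d : ℕ) (H : SimpleGraph V) : Prop :=
  ∀ s : Set V, s.Nonempty → ∃ v ∈ s, (H.neighborSet v ∩ s).ncard ≤ d

/-- The graph `H` has maximum degree at most `h`. -/
def MaxDegreeLE {V : Type*} (h : ℕ) (H : SimpleGraph V) : Prop :=
  ∀ v : V, (H.neighborSet v).ncard ≤ h

/-- A graph `G` is `(d,h)`-decomposable: its edge set is partitioned into the edge
sets of two spanning subgraphs `H₁` and `H₂`, where `H₁` is `d`-degenerate and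
`H₂` has maximum degree at most `h`. -/
def Decomposable {V : Type*} (d h : ℕ) (G : SimpleGraph V) : Prop :=
  ∃ H₁ H₂ : SimpleGraph V, H₁ ⊔ H₂ = G ∧ Disjoint H₁ H₂ ∧
    Degenerate d H₁ ∧ MaxDegreeLE h H₂

/-!
Delete the configuration, decompose the rest, and put the edges `v₁v₂` and `v₃v₄` into the second
part; they form a matching that misses the rest, so the maximum degree bound survives. In the
remaining graph `v₁` and `v₃` have degree at most `3`, and peeling off `v₁`, `v₃`, `v`, `v₂`, `v₄`
in this order always removes a vertex of degree at most `3`: `v` has lost `v₁, v₃`, then `v₂` has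
lost `v₁, v`, and `v₄` has lost `v₃, v`.
-/

section Degeneracy

variable {V : Type*} {d : ℕ} {G H : SimpleGraph V} {X : Set V} {u : V}

/-- Degeneracy relative to a set `X`: the vertices outside `X` can be peeled off `H` one at a time,
each having at most `d` neighbours among the vertices still present. The cardinality is an `encard`,
so that the bound excludes infinite neighbourhoods. -/
def DegenerateOutside (d : ℕ) (H : SimpleGraph V) (X : Set V) : Prop :=
  ∀ s : Set V, ¬ s ⊆ X → ∃ v ∈ s \ X, (H.neighborSet v ∩ s).encard ≤ d

theorem degenerateOutside_univ : DegenerateOutside d H Set.univ :=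
  fun s hs => absurd (Set.subset_univ s) hs

theorem DegenerateOutside.anti (hHG : H ≤ G) (hG : DegenerateOutside d G X) :
    DegenerateOutside d H X := by
  intro s hs
  obtain ⟨v, hv, hcard⟩ := hG s hs
  have hsub : H.neighborSet v ∩ s ⊆ G.neighborSet v ∩ s :=
    Set.inter_subset_inter_left s fun _ hvw => hHG hvw
  exact ⟨v, hv, (Set.encard_le_encard hsub).trans hcard⟩

theorem DegenerateOutside.of_insert (hu : (H.neighborSet u ∩ X).encard ≤ d)
    (hH : DegenerateOutside d H (insert u X)) : DegenerateOutside d H X := by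
  intro s hs
  by_cases hsu : s ⊆ insert u X
  · obtain ⟨x, hxs, hxX⟩ := Set.not_subset.1 hs
    obtain rfl : x = u := (hsu hxs).resolve_right hxX
    have hsub : H.neighborSet x ∩ s ⊆ H.neighborSet x ∩ X :=
      fun y hy => ⟨hy.1, (hsu hy.2).resolve_left hy.1.ne'⟩
    exact ⟨x, ⟨hxs, hxX⟩, (Set.encard_le_encard hsub).trans hu⟩
  · obtain ⟨w, ⟨hws, hw⟩, hcard⟩ := hH s hsu
    exact ⟨w, ⟨hws, fun hwX => hw (.inr hwX)⟩, hcard⟩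

theorem DegenerateOutside.degenerate (hH : DegenerateOutside d H X)
    (hX : Degenerate d (H.induce X)) : Degenerate d H := by
  intro s hs
  by_cases hsX : s ⊆ X
  · obtain ⟨x, hx⟩ := hs
    obtain ⟨w, hws, hcard⟩ := hX (Subtype.val ⁻¹' s) ⟨⟨x, hsX hx⟩, hx⟩
    have himage : (↑) '' ((H.induce X).neighborSet w ∩ Subtype.val ⁻¹' s) =
        H.neighborSet w ∩ s := by
      ext y
      constructor
      · rintro ⟨z, hz, rfl⟩
        exact hz
      · exact fun hy => ⟨⟨y, hsX hy.2⟩, hy, rfl⟩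
    exact ⟨w, hws, by rwa [← himage, Set.ncard_image_of_injective _ Subtype.val_injective]⟩
  · obtain ⟨w, hw, hcard⟩ := hH s hsX
    exact ⟨w, hw.1, (Set.encard_le_coe_iff_finite_ncard_le.1 hcard).2⟩

theorem encard_neighborSet_inter_le_of_disjoint {T : Set V} {k : ℕ} (hHG : H ≤ G)
    (hdeg : (G.neighborSet u).encard ≤ ↑(d + k)) (hTG : T ⊆ G.neighborSet u)
    (hT : T.encard = k) (hdisj : Disjoint (H.neighborSet u ∩ X) T) :
    (H.neighborSet u ∩ X).encard ≤ d := by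
  have hHX : H.neighborSet u ∩ X ⊆ G.neighborSet u := fun _ hw => hHG hw.1
  refine (ENat.add_le_add_iff_right (ENat.natCast_ne_top k)).1 ?_
  calc (H.neighborSet u ∩ X).encard + k
      = (H.neighborSet u ∩ X ∪ T).encard := by rw [Set.encard_union_eq hdisj, hT]
    _ ≤ (G.neighborSet u).encard := Set.encard_le_encard (Set.union_subset hHX hTG)
    _ ≤ d + k := by exact_mod_cast hdeg

theorem DegenerateOutside.of_insert_of_disjoint {T : Set V} {k : ℕ} (hHG : H ≤ G)
    (hdeg : (G.neighborSet u).encard ≤ ↑(d + k)) (hTG : T ⊆ G.neighborSet u)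
    (hT : T.encard = k) (hdisj : Disjoint (H.neighborSet u ∩ X) T)
    (hH : DegenerateOutside d H (insert u X)) : DegenerateOutside d H X :=
  hH.of_insert (encard_neighborSet_inter_le_of_disjoint hHG hdeg hTG hT hdisj)

end Degeneracy

section MaxDegree

variable {V W : Type*} {h : ℕ} {H K : SimpleGraph V}

theorem MaxDegreeLE.map (f : V ↪ W) (hH : MaxDegreeLE h H) : MaxDegreeLE h (H.map f) := by
  intro w
  by_cases hw : w ∈ Set.range f
  · obtain ⟨u, rfl⟩ := hw
    have himage : (H.map f).neighborSet (f u) = f '' H.neighborSet u := by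
      ext y
      simp
    rw [himage, Set.ncard_image_of_injective _ f.injective]
    exact hH u
  · have hempty : (H.map f).neighborSet w = ∅ := by
      ext y
      simp only [mem_neighborSet, map_adj, Set.mem_empty_iff_false, iff_false]
      rintro ⟨a, b, -, rfl, -⟩
      exact hw ⟨a, rfl⟩
    simp [hempty]

theorem MaxDegreeLE.sup (hdisj : Disjoint H.support K.support) (hH : MaxDegreeLE h H)
    (hK : MaxDegreeLE h K) : MaxDegreeLE h (H ⊔ K) := by
  intro u
  by_cases hu : u ∈ H.support
  · have hN : (H ⊔ K).neighborSet u = H.neighborSet u := by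
      ext w
      exact or_iff_left fun huw => hdisj.notMem_of_mem_left hu ⟨w, huw⟩
    exact hN ▸ hH u
  · have hN : (H ⊔ K).neighborSet u = K.neighborSet u := by
      ext w
      exact or_iff_right fun huw => hu ⟨w, huw⟩
    exact hN ▸ hK u

theorem maxDegreeLE_edge (a b : V) : MaxDegreeLE 1 (edge a b) := by
  intro u
  have hsub : ((edge a b).neighborSet u).Subsingleton := by
    intro x hx y hy
    simp only [mem_neighborSet, edge_adj] at hx hy
    grind
  exact (Set.ncard_le_one hsub.finite).2 hsub

theorem MaxDegreeLE.mono {k : ℕ} (hhk : h ≤ k) (hH : MaxDegreeLE h H) : MaxDegreeLE k H :=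
  fun u => (hH u).trans hhk

theorem support_edge_subset (a b : V) : (edge a b).support ⊆ {a, b} := by
  rintro x ⟨y, hxy⟩
  exact ((edge_adj _ _ _ _).1 hxy).1.imp And.left And.left

end MaxDegree

section Decomposition

variable {V : Type*} {d h : ℕ} {G K : SimpleGraph V} {X : Set V}

theorem decomposable_iff_exists_le :
    Decomposable d h G ↔ ∃ M ≤ G, MaxDegreeLE h M ∧ Degenerate d (G \ M) := by
  constructor
  · rintro ⟨H, M, rfl, hdisj, hH, hM⟩
    exact ⟨M, le_sup_right, hM, by rwa [hdisj.sup_sdiff_cancel_right]⟩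
  · rintro ⟨M, hMG, hM, hdeg⟩
    exact ⟨G \ M, M, sdiff_sup_cancel hMG, disjoint_sdiff_self_left, hdeg, hM⟩

theorem Decomposable.of_induce (hKG : K ≤ G) (hKX : Disjoint K.support X)
    (hK : MaxDegreeLE h K) (hout : DegenerateOutside d (G \ K) X)
    (hX : Decomposable d h (G.induce X)) : Decomposable d h G := by
  obtain ⟨M, hMG, hM, hdeg⟩ := decomposable_iff_exists_le.1 hX
  have hMsupp : M.spanningCoe.support ⊆ X := by
    rw [support_spanningCoe]
    exact Subtype.coe_image_subset X _
  have hMle : M.spanningCoe ≤ G := (map_le_iff_le_comap _ _ _).2 hMG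
  have hinduce : (G \ (M.spanningCoe ⊔ K)).induce X = G.induce X \ M := by
    have hMadj (a b : X) : M.spanningCoe.Adj a b ↔ M.Adj a b := map_adj_apply
    have hKadj (a b : X) : ¬ K.Adj a b := fun hab => hKX.notMem_of_mem_left ⟨b, hab⟩ a.2
    ext a b
    simp [hMadj, hKadj]
  refine decomposable_iff_exists_le.2 ⟨M.spanningCoe ⊔ K, sup_le hMle hKG, ?_, ?_⟩
  · exact (hM.map _).sup (hKX.symm.mono_left hMsupp) hK
  · exact (hout.anti (sdiff_le_sdiff_left le_sup_right)).degenerate (hinduce ▸ hdeg)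

end Decomposition

theorem degenerateOutside_of_two_triangles {V : Type*} {d : ℕ} {G H : SimpleGraph V}
    {v v₁ v₂ v₃ v₄ : V} (hHG : H ≤ G) (hne13 : v₁ ≠ v₃) (hne14 : v₁ ≠ v₄) (hne23 : v₂ ≠ v₃)
    (hadj1 : G.Adj v v₁) (hadj2 : G.Adj v v₂) (hadj3 : G.Adj v v₃) (hadj4 : G.Adj v v₄)
    (h12 : G.Adj v₁ v₂) (h34 : G.Adj v₃ v₄)
    (hv : (G.neighborSet v).encard ≤ ↑(d + 2))
    (hd1 : (G.neighborSet v₁).encard ≤ ↑(d + 1)) (hd2 : (G.neighborSet v₂).encard ≤ ↑(d + 2))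
    (hd3 : (G.neighborSet v₃).encard ≤ ↑(d + 1)) (hd4 : (G.neighborSet v₄).encard ≤ ↑(d + 2))
    (hH12 : ¬ H.Adj v₁ v₂) (hH34 : ¬ H.Adj v₃ v₄) :
    DegenerateOutside d H {u : V | u ≠ v ∧ u ≠ v₁ ∧ u ≠ v₂ ∧ u ≠ v₃ ∧ u ≠ v₄} := by
  have hvne1 := hadj1.ne
  have hvne3 := hadj3.ne
  have hvne4 := hadj4.ne
  have hne12 := h12.ne
  have hne34 := h34.ne
  refine .of_insert_of_disjoint (u := v₄) (T := {v, v₃}) hHG hd4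
    (Set.pair_subset hadj4.symm h34.symm) (Set.encard_pair hvne3) (by grind) ?_
  refine .of_insert_of_disjoint (u := v₂) (T := {v, v₁}) hHG hd2
    (Set.pair_subset hadj2.symm h12.symm) (Set.encard_pair hvne1) (by grind) ?_
  refine .of_insert_of_disjoint (u := v) (T := {v₁, v₃}) hHG hv
    (Set.pair_subset hadj1 hadj3) (Set.encard_pair hne13) (by grind) ?_
  refine .of_insert_of_disjoint (u := v₃) (T := {v₄}) hHG hd3
    (Set.singleton_subset_iff.2 h34) (Set.encard_singleton v₄) (by simp [hH34]) ?_
  refine .of_insert_of_disjoint (u := v₁) (T := {v₂}) hHG hd1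
    (Set.singleton_subset_iff.2 h12) (Set.encard_singleton v₂) (by simp [hH12]) ?_
  convert degenerateOutside_univ
  grind

theorem stmt_4_general {V : Type*} {d h : ℕ} (hh : 1 ≤ h) {G : SimpleGraph V}
    {v v₁ v₂ v₃ v₄ : V} (hne13 : v₁ ≠ v₃) (hne14 : v₁ ≠ v₄) (hne23 : v₂ ≠ v₃) (hne24 : v₂ ≠ v₄)
    (hadj1 : G.Adj v v₁) (hadj2 : G.Adj v v₂) (hadj3 : G.Adj v v₃) (hadj4 : G.Adj v v₄)
    (h12 : G.Adj v₁ v₂) (h34 : G.Adj v₃ v₄)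
    (hv : (G.neighborSet v).encard ≤ ↑(d + 2))
    (hd1 : (G.neighborSet v₁).encard ≤ ↑(d + 1)) (hd2 : (G.neighborSet v₂).encard ≤ ↑(d + 2))
    (hd3 : (G.neighborSet v₃).encard ≤ ↑(d + 1)) (hd4 : (G.neighborSet v₄).encard ≤ ↑(d + 2))
    (hdec : Decomposable d h
      (G.induce {u : V | u ≠ v ∧ u ≠ v₁ ∧ u ≠ v₂ ∧ u ≠ v₃ ∧ u ≠ v₄})) :
    Decomposable d h G := by
  set X : Set V := {u | u ≠ v ∧ u ≠ v₁ ∧ u ≠ v₂ ∧ u ≠ v₃ ∧ u ≠ v₄}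
  have hdisj : Disjoint (edge v₁ v₂).support (edge v₃ v₄).support :=
    .mono (support_edge_subset _ _) (support_edge_subset _ _) (by grind)
  have hKX : Disjoint (edge v₁ v₂ ⊔ edge v₃ v₄).support X := by
    rw [Set.disjoint_left]
    rintro a ⟨b, hab⟩
    grind
  have hmax : MaxDegreeLE h (edge v₁ v₂ ⊔ edge v₃ v₄) :=
    ((maxDegreeLE_edge v₁ v₂).sup hdisj (maxDegreeLE_edge v₃ v₄)).mono hh
  have hKG : edge v₁ v₂ ⊔ edge v₃ v₄ ≤ G :=
    sup_le ((edge_le_iff G).2 (.inr h12)) ((edge_le_iff G).2 (.inr h34))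
  have hout : DegenerateOutside d (G \ (edge v₁ v₂ ⊔ edge v₃ v₄)) X :=
    degenerateOutside_of_two_triangles sdiff_le hne13 hne14 hne23 hadj1 hadj2 hadj3 hadj4 h12 h34
      hv hd1 hd2 hd3 hd4 (by simp [edge_adj, h12.ne]) (by simp [edge_adj, h34.ne])
  exact hdec.of_induce hKG hKX hmax hout

theorem stmt_4 {V : Type*} [Fintype V] (G : SimpleGraph V) (v v₁ v₂ v₃ v₄ : V)
    (hv : (G.neighborSet v).ncard = 5)
    (hne12 : v₁ ≠ v₂) (hne13 : v₁ ≠ v₃) (hne14 : v₁ ≠ v₄)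
    (hne23 : v₂ ≠ v₃) (hne24 : v₂ ≠ v₄) (hne34 : v₃ ≠ v₄)
    (hadj1 : G.Adj v v₁) (hadj2 : G.Adj v v₂) (hadj3 : G.Adj v v₃) (hadj4 : G.Adj v v₄)
    (h12 : G.Adj v₁ v₂) (h34 : G.Adj v₃ v₄)
    (h13 : ¬ G.Adj v₁ v₃) (h14 : ¬ G.Adj v₁ v₄)
    (h23 : ¬ G.Adj v₂ v₃) (h24 : ¬ G.Adj v₂ v₄)
    (hd1 : (G.neighborSet v₁).ncard = 4) (hd3 : (G.neighborSet v₃).ncard = 4)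
    (hd2 : (G.neighborSet v₂).ncard = 5) (hd4 : (G.neighborSet v₄).ncard = 5)
    (hdec : Decomposable 3 1
      (G.induce {u : V | u ≠ v ∧ u ≠ v₁ ∧ u ≠ v₂ ∧ u ≠ v₃ ∧ u ≠ v₄})) :
    Decomposable 3 1 G := by
  have hdeg {u : V} {k : ℕ} (hu : (G.neighborSet u).ncard = k) :
      (G.neighborSet u).encard ≤ k := hu ▸ (Set.toFinite _).cast_ncard_eq.ge
  exact stmt_4_general le_rfl hne13 hne14 hne23 hne24 hadj1 hadj2 hadj3 hadj4 h12 h34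
    (hdeg hv) (hdeg hd1) (hdeg hd2) (hdeg hd3) (hdeg hd4) hdec
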